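/- arXiv:2402.16748 — 4 statements merged into one kernel-verified Lean document; each statement's English description precedes it below -/
import Mathlib

section
/- (Jacobian of the preconditioned estimator.) For all (x, y) and every direction v ∈ ℝ^{d_x}: D_xΩ^P(x, y)[v] = D_xΩ(x̃(x, y), y)[E^P(x, y)v], where E^P(x, y)v := v − P(x, y)^{−1}(D_xF(x, y)[v]) + P(x, y)^{−1}(D_xP(x, y)[v]) P(x, y)^{−1} F(x, y). In particular, at the root, E^P(x⋆(y), y) = I_{d_x} − P(x⋆(y), y)^{−1} F_1(x⋆(y), y). -/
noncomputable section

open ContinuousLinearMap RealInnerProductSpace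

abbrev E (n : ℕ) : Type := EuclideanSpace ℝ (Fin n)

variable {dx dy : ℕ}

/-- Partial Fréchet derivative in the first variable. -/
def pd1 {k : ℕ} (G : E dx × E dy → E k) (x : E dx) (y : E dy) : E dx →L[ℝ] E k :=
  fderiv ℝ (fun x' => G (x', y)) x

/-- Partial Fréchet derivative in the second variable. -/
def pd2 {k : ℕ} (G : E dx × E dy → E k) (x : E dx) (y : E dy) : E dy →L[ℝ] E k :=
  fderiv ℝ (fun y' => G (x, y')) y

/-- Partial gradient in the first variable. -/
def grad1 (g : E dx × E dy → ℝ) (x : E dx) (y : E dy) : E dx :=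
  gradient (fun x' => g (x', y)) x

/-- Partial gradient in the second variable. -/
def grad2 (g : E dx × E dy → ℝ) (x : E dx) (y : E dy) : E dy :=
  gradient (fun y' => g (x, y')) y

/-- Ψ(x, y) = −F₂(x,y)^⊤ ∘ (F₁(x,y)^⊤)⁻¹. -/
def Psi (F : E dx × E dy → E dx) (x : E dx) (y : E dy) : E dx →L[ℝ] E dy :=
  -((adjoint (pd2 F x y)).comp (Ring.inverse (adjoint (pd1 F x y))))

/-- The IFT formula Ω(x,y) = g₂(x,y) + Ψ(x,y) g₁(x,y). -/
def Omega (F : E dx × E dy → E dx) (g : E dx × E dy → ℝ) (x : E dx) (y : E dy) : E dy :=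
  grad2 g x y + Psi F x y (grad1 g x y)

/-- Preconditioning step x̃(x,y) = x − P(x,y)⁻¹ F(x,y). -/
def xtilde (F : E dx × E dy → E dx) (P : E dx × E dy → (E dx →L[ℝ] E dx))
    (x : E dx) (y : E dy) : E dx :=
  x - Ring.inverse (P (x, y)) (F (x, y))

/-- Preconditioned formula Ωᴾ(x,y) = Ω(x̃(x,y), y). -/
def OmegaP (F : E dx × E dy → E dx) (g : E dx × E dy → ℝ)
    (P : E dx × E dy → (E dx →L[ℝ] E dx)) (x : E dx) (y : E dy) : E dy :=
  Omega F g (xtilde F P x y) y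

/-- Eᴾ(x,y)v = v − P(x,y)⁻¹(D_xF(x,y)[v]) + P(x,y)⁻¹(D_xP(x,y)[v]) P(x,y)⁻¹ F(x,y). -/
def EPapp (F : E dx × E dy → E dx) (P : E dx × E dy → (E dx →L[ℝ] E dx))
    (x : E dx) (y : E dy) (v : E dx) : E dx :=
  v - Ring.inverse (P (x, y)) (pd1 F x y v) +
    Ring.inverse (P (x, y))
      ((fderiv ℝ (fun x' => P (x', y)) x v) (Ring.inverse (P (x, y)) (F (x, y))))

/-- A continuous additive map between real normed spaces preserves differentiability. -/
lemma Differentiable.continuous_addMonoidHom_comp {V W X : Type*}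
    [NormedAddCommGroup V] [NormedSpace ℝ V] [NormedAddCommGroup W] [NormedSpace ℝ W]
    [NormedAddCommGroup X] [NormedSpace ℝ X] {f : X → V} (hf : Differentiable ℝ f)
    (L : V →+ W) (hL : Continuous L) : Differentiable ℝ (fun x => L (f x)) :=
  (L.toRealLinearMap hL).differentiable.comp hf

lemma Differentiable.adjoint {X V W : Type*} [NormedAddCommGroup X] [NormedSpace ℝ X]
    [NormedAddCommGroup V] [InnerProductSpace ℝ V] [CompleteSpace V]
    [NormedAddCommGroup W] [InnerProductSpace ℝ W] [CompleteSpace W]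
    {A : X → V →L[ℝ] W} (hA : Differentiable ℝ A) :
    Differentiable ℝ (fun x => ContinuousLinearMap.adjoint (A x)) :=
  hA.continuous_addMonoidHom_comp
    (AddMonoidHom.mk' (fun B : V →L[ℝ] W => ContinuousLinearMap.adjoint B) (map_add _))
    ContinuousLinearMap.adjoint.continuous

lemma Differentiable.gradient {X V : Type*} [NormedAddCommGroup X] [NormedSpace ℝ X]
    [NormedAddCommGroup V] [InnerProductSpace ℝ V] [CompleteSpace V]
    {f : X → V → ℝ} {c : X → V} (hf : Differentiable ℝ (fun x => fderiv ℝ (f x) (c x))) :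
    Differentiable ℝ (fun x => _root_.gradient (f x) (c x)) :=
  hf.continuous_addMonoidHom_comp
    (AddMonoidHom.mk' (fun l : V →L[ℝ] ℝ => (InnerProductSpace.toDual ℝ V).symm l) (map_add _))
    (InnerProductSpace.toDual ℝ V).symm.continuous

lemma differentiable_fderiv_fst {V : Type*} [NormedAddCommGroup V] [NormedSpace ℝ V]
    {G : E dx × E dy → V} (hG : ContDiff ℝ 2 G) (y : E dy) :
    Differentiable ℝ (fun x => fderiv ℝ (fun x' => G (x', y)) x) :=
  (ContDiff.fderiv (n := 1) (m := 2) (f := fun _ x' => G (x', y)) (g := id)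
    (hG.comp (contDiff_snd.prodMk contDiff_const)) contDiff_id
    (by norm_num)).differentiable (by norm_num)

lemma differentiable_fderiv_snd {V : Type*} [NormedAddCommGroup V] [NormedSpace ℝ V]
    {G : E dx × E dy → V} (hG : ContDiff ℝ 2 G) (y : E dy) :
    Differentiable ℝ (fun x => fderiv ℝ (fun y' => G (x, y')) y) :=
  (ContDiff.fderiv (n := 1) (m := 2) (f := fun x y' => G (x, y')) (g := fun _ => y)
    hG contDiff_const (by norm_num)).differentiable (by norm_num)

lemma isUnit_adjoint {V : Type*} [NormedAddCommGroup V] [InnerProductSpace ℝ V]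
    [CompleteSpace V] {A : V →L[ℝ] V} (hA : IsUnit A) : IsUnit (adjoint A) := by
  rw [← star_eq_adjoint]
  exact hA.star

lemma differentiable_Omega {F : E dx × E dy → E dx} {g : E dx × E dy → ℝ}
    (hF : ContDiff ℝ 2 F) (hg : ContDiff ℝ 2 g)
    (hinv : ∀ (x : E dx) (y : E dy), IsUnit (pd1 F x y)) (y : E dy) :
    Differentiable ℝ (fun x => Omega F g x y) := by
  have hg2 : Differentiable ℝ (fun x => grad2 g x y) :=
    (differentiable_fderiv_snd hg y).gradient
  have hg1 : Differentiable ℝ (fun x => grad1 g x y) :=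
    (differentiable_fderiv_fst hg y).gradient (f := fun _ x' => g (x', y)) (c := id)
  have hF2 : Differentiable ℝ (fun x => adjoint (pd2 F x y)) :=
    (differentiable_fderiv_snd hF y).adjoint
  have hF1 : Differentiable ℝ (fun x => adjoint (pd1 F x y)) :=
    (differentiable_fderiv_fst hF y).adjoint
  have hF1inv : Differentiable ℝ (fun x => Ring.inverse (adjoint (pd1 F x y))) := fun x => by
    obtain ⟨u, hu⟩ := isUnit_adjoint (hinv x y)
    have h := (hasFDerivAt_ringInverse (𝕜 := ℝ) u).differentiableAt
    rw [hu] at h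
    exact h.comp x (hF1 x)
  exact hg2.add ((hF2.clm_comp hF1inv).neg.clm_apply hg1)

lemma hasFDerivAt_ringInverse_apply {X V : Type*} [NormedAddCommGroup X] [NormedSpace ℝ X]
    [NormedAddCommGroup V] [NormedSpace ℝ V] [CompleteSpace V]
    {A : X → V →L[ℝ] V} {f : X → V} {x : X} (hA : DifferentiableAt ℝ A x)
    (hf : DifferentiableAt ℝ f x) (hu : IsUnit (A x)) :
    HasFDerivAt (fun x' => Ring.inverse (A x') (f x'))
      ((Ring.inverse (A x)).comp (fderiv ℝ f x) -
        (Ring.inverse (A x)).comp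
          ((fderiv ℝ A x).flip (Ring.inverse (A x) (f x)))) x := by
  obtain ⟨u, hu⟩ := hu
  have h := hasFDerivAt_ringInverse (𝕜 := ℝ) u
  rw [hu] at h
  refine ((h.comp x hA.hasFDerivAt).clm_apply hf.hasFDerivAt).congr_fderiv ?_
  ext v
  simp [← hu, sub_eq_add_neg]

lemma hasFDerivAt_xtilde {F : E dx × E dy → E dx} {P : E dx × E dy → (E dx →L[ℝ] E dx)}
    (hF : Differentiable ℝ F) (hP : Differentiable ℝ P) {x : E dx} {y : E dy}
    (hu : IsUnit (P (x, y))) :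
    ∃ L : E dx →L[ℝ] E dx, HasFDerivAt (fun x' => xtilde F P x' y) L x ∧
      ∀ v, L v = EPapp F P x y v := by
  have hi : DifferentiableAt ℝ (fun x' : E dx => (x', y)) x := by fun_prop
  refine ⟨_, (hasFDerivAt_id x).sub (hasFDerivAt_ringInverse_apply
    ((hP (x, y)).comp x hi) ((hF (x, y)).comp x hi) hu), fun v => ?_⟩
  simp only [EPapp, pd1, sub_apply, comp_apply, flip_apply, id_apply]
  abel

/-- Jacobian of the preconditioned estimator. -/
theorem stmt6 (dx dy : ℕ) (hdx : 0 < dx) (hdy : 0 < dy)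
    (F : E dx × E dy → E dx) (g : E dx × E dy → ℝ)
    (hF : ContDiff ℝ (⊤ : ℕ∞) F) (hg : ContDiff ℝ (⊤ : ℕ∞) g)
    (hinv : ∀ (x : E dx) (y : E dy), IsUnit (pd1 F x y))
    (xs : E dy → E dx) (hxs : Differentiable ℝ xs)
    (hroot : ∀ y : E dy, F (xs y, y) = 0)
    (P : E dx × E dy → (E dx →L[ℝ] E dx))
    (hP : ContDiff ℝ 1 P)
    (hPinv : ∀ (x : E dx) (y : E dy), IsUnit (P (x, y))) :
    (∀ (x : E dx) (y : E dy) (v : E dx),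
      fderiv ℝ (fun x' => OmegaP F g P x' y) x v =
        fderiv ℝ (fun x' => Omega F g x' y) (xtilde F P x y) (EPapp F P x y v)) ∧
    (∀ (y : E dy) (v : E dx),
      EPapp F P (xs y) y v = v - Ring.inverse (P (xs y, y)) (pd1 F (xs y) y v)) := by
  refine ⟨fun x y v => ?_, fun y v => by simp [EPapp, hroot]⟩
  obtain ⟨L, hL, hLv⟩ := hasFDerivAt_xtilde (hF.differentiable (by simp))
    (hP.differentiable (by simp)) (hPinv x y)
  have hΩ := differentiable_Omega (contDiff_infty.1 hF 2) (contDiff_infty.1 hg 2) hinv y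
    (xtilde F P x y)
  rw [← hLv]
  exact congrArg (fun M => M v) (hΩ.hasFDerivAt.comp x hL).fderiv
end
end

section
/- (1-D super-efficiency characterization.) The reparameterized formula Ω^φ is super-efficient, i.e. ∂_xΩ^φ(x⋆(y), y) = 0 for all y ∈ ℝ, if and only if for all y ∈ ℝ: φ_{12}(z⋆(y), y)/φ_1(z⋆(y), y) − φ_2(z⋆(y), y)·φ_{11}(z⋆(y), y)/φ_1(z⋆(y), y)² − F_2(x⋆(y), y)·φ_{11}(z⋆(y), y)/(F_1(x⋆(y), y)·φ_1(z⋆(y), y)²) = g_{12}(x⋆(y), y)/g_1(x⋆(y), y) − F_{12}(x⋆(y), y)/F_1(x⋆(y), y), where z⋆(y) := φ(·, y)^{−1}(x⋆(y)). -/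
noncomputable section

/-- Partial derivative in the first (scalar) variable. -/
def d1 (G : ℝ × ℝ → ℝ) (x y : ℝ) : ℝ := deriv (fun x' => G (x', y)) x

/-- Partial derivative in the second (scalar) variable. -/
def d2 (G : ℝ × ℝ → ℝ) (x y : ℝ) : ℝ := deriv (fun y' => G (x, y')) y

/-- Second partial derivative in the first variable. -/
def d11 (G : ℝ × ℝ → ℝ) (x y : ℝ) : ℝ := deriv (fun x' => d1 G x' y) x

/-- Mixed partial derivative: derivative in the second variable of G₁. -/
def d12 (G : ℝ × ℝ → ℝ) (x y : ℝ) : ℝ := deriv (fun y' => d1 G x y') y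

/-- Mixed partial derivative: derivative in the first variable of G₂. -/
def d21 (G : ℝ × ℝ → ℝ) (x y : ℝ) : ℝ := deriv (fun x' => d2 G x' y) x

/-- Ψ(x,y) = −F₂(x,y)/F₁(x,y). -/
def Psi1d (F : ℝ × ℝ → ℝ) (x y : ℝ) : ℝ := -(d2 F x y) / d1 F x y

/-- Ω(x,y) = g₂(x,y) + Ψ(x,y)·g₁(x,y). -/
def Omega1d (F g : ℝ × ℝ → ℝ) (x y : ℝ) : ℝ := d2 g x y + Psi1d F x y * d1 g x y

/-- Uᶠ(x,y) = F₂ + F₁·φ₂(z,y) + φ₂₁(z,y)·F(x,y)/φ₁(z,y), with z = φ(·,y)⁻¹(x). -/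
def U1d (F φ φinv : ℝ × ℝ → ℝ) (x y : ℝ) : ℝ :=
  d2 F x y + d1 F x y * d2 φ (φinv (x, y)) y +
    d21 φ (φinv (x, y)) y * F (x, y) / d1 φ (φinv (x, y)) y

/-- Vᶠ(x,y) = φ₁₁(z,y)·F(x,y)/φ₁(z,y)² + F₁(x,y), with z = φ(·,y)⁻¹(x). -/
def V1d (F φ φinv : ℝ × ℝ → ℝ) (x y : ℝ) : ℝ :=
  d11 φ (φinv (x, y)) y * F (x, y) / (d1 φ (φinv (x, y)) y) ^ 2 + d1 F x y

/-- Ψᶠ(x,y) = φ₂(z,y) − Uᶠ(x,y)/Vᶠ(x,y). -/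
def Psiphi1d (F φ φinv : ℝ × ℝ → ℝ) (x y : ℝ) : ℝ :=
  d2 φ (φinv (x, y)) y - U1d F φ φinv x y / V1d F φ φinv x y

/-- Ωᶠ(x,y) = g₂(x,y) + Ψᶠ(x,y)·g₁(x,y). -/
def Omegaphi1d (F g φ φinv : ℝ × ℝ → ℝ) (x y : ℝ) : ℝ :=
  d2 g x y + Psiphi1d F φ φinv x y * d1 g x y

theorem d1_eq_fderiv {G : ℝ × ℝ → ℝ} (hG : Differentiable ℝ G) (x y : ℝ) :
    d1 G x y = fderiv ℝ G (x, y) (1, 0) :=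
  ((hG (x, y)).hasFDerivAt.comp_hasDerivAt x
    ((hasDerivAt_id x).prodMk (hasDerivAt_const x y))).deriv

theorem d2_eq_fderiv {G : ℝ × ℝ → ℝ} (hG : Differentiable ℝ G) (x y : ℝ) :
    d2 G x y = fderiv ℝ G (x, y) (0, 1) :=
  ((hG (x, y)).hasFDerivAt.comp_hasDerivAt y
    ((hasDerivAt_const y x).prodMk (hasDerivAt_id y))).deriv

theorem contDiff_d1 {G : ℝ × ℝ → ℝ} (hG : ContDiff ℝ (⊤ : ℕ∞) G) :
    ContDiff ℝ (⊤ : ℕ∞) (fun p : ℝ × ℝ => d1 G p.1 p.2) := by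
  simp only [d1_eq_fderiv (hG.differentiable (by simp))]
  exact (hG.fderiv_right (by simp)).clm_apply contDiff_const

theorem contDiff_d2 {G : ℝ × ℝ → ℝ} (hG : ContDiff ℝ (⊤ : ℕ∞) G) :
    ContDiff ℝ (⊤ : ℕ∞) (fun p : ℝ × ℝ => d2 G p.1 p.2) := by
  simp only [d2_eq_fderiv (hG.differentiable (by simp))]
  exact (hG.fderiv_right (by simp)).clm_apply contDiff_const

theorem hasDerivAt_d1 {G : ℝ × ℝ → ℝ} (hG : ContDiff ℝ (⊤ : ℕ∞) G) (x y : ℝ) :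
    HasDerivAt (fun x' => G (x', y)) (d1 G x y) x := by
  have hG' : Differentiable ℝ G := hG.differentiable (by simp)
  exact DifferentiableAt.hasDerivAt (by fun_prop)

/-- Mixed partial derivatives of a smooth function agree. -/
theorem d21_eq_d12 {G : ℝ × ℝ → ℝ} (hG : ContDiff ℝ (⊤ : ℕ∞) G) (x y : ℝ) :
    d21 G x y = d12 G x y := by
  have hG' : Differentiable ℝ G := hG.differentiable (by simp)
  have hfd : Differentiable ℝ (fderiv ℝ G) :=
    (hG.fderiv_right (m := (⊤ : ℕ∞)) (by simp)).differentiable (by simp)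
  have h21 : d21 G x y = fderiv ℝ (fderiv ℝ G) (x, y) (1, 0) (0, 1) := by
    change d1 (fun p => d2 G p.1 p.2) x y = _
    rw [d1_eq_fderiv ((contDiff_d2 hG).differentiable (by simp))]
    simp only [d2_eq_fderiv hG']
    rw [fderiv_clm_apply (hfd _) (differentiableAt_const _)]
    simp
  have h12 : d12 G x y = fderiv ℝ (fderiv ℝ G) (x, y) (0, 1) (1, 0) := by
    change d2 (fun p => d1 G p.1 p.2) x y = _
    rw [d2_eq_fderiv ((contDiff_d1 hG).differentiable (by simp))]
    simp only [d1_eq_fderiv hG']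
    rw [fderiv_clm_apply (hfd _) (differentiableAt_const _)]
    simp
  have htwo : minSmoothness ℝ 2 ≤ ((⊤ : ℕ∞) : WithTop ℕ∞) := by
    rw [minSmoothness_of_isRCLikeNormedField]
    exact WithTop.coe_le_coe.2 (le_top (a := (2 : ℕ∞)))
  rw [h21, h12]
  exact hG.contDiffAt.isSymmSndFDerivAt htwo _ _

section AffineInFirst

variable {G : ℝ × ℝ → ℝ} {a b : ℝ → ℝ}

theorem d1_of_affine (hG : ∀ x y, G (x, y) = a y * x + b y) (x y : ℝ) : d1 G x y = a y := by
  simp only [d1, hG]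
  simp

theorem d2_of_affine (hG : ∀ x y, G (x, y) = a y * x + b y) (ha : Differentiable ℝ a)
    (hb : Differentiable ℝ b) (x y : ℝ) : d2 G x y = deriv a y * x + deriv b y := by
  simp only [d2, hG]
  exact (((ha y).hasDerivAt.mul_const x).add (hb y).hasDerivAt).deriv

theorem d12_of_affine (hG : ∀ x y, G (x, y) = a y * x + b y) (x y : ℝ) :
    d12 G x y = deriv a y := by
  simp only [d12, d1_of_affine hG]

end AffineInFirst

/-- The derivative in `x` of the fibrewise inverse of `φ` is `1 / φ₁`. -/
theorem hasDerivAt_fibre_inverse {φ φinv : ℝ × ℝ → ℝ} (hφ : ContDiff ℝ (⊤ : ℕ∞) φ)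
    (hφinv : ContDiff ℝ (⊤ : ℕ∞) φinv) (hright : ∀ x y : ℝ, φ (φinv (x, y), y) = x)
    (x y : ℝ) :
    HasDerivAt (fun x' => φinv (x', y)) (d1 φ (φinv (x, y)) y)⁻¹ x := by
  have hinv := hasDerivAt_d1 hφinv x y
  have hcomp := HasDerivAt.comp x (hasDerivAt_d1 hφ (φinv (x, y)) y) hinv
  have hid : ((fun z => φ (z, y)) ∘ fun x' => φinv (x', y)) = id :=
    funext fun x' => hright x' y
  rw [hid] at hcomp
  have hone := hcomp.unique (hasDerivAt_id x)
  rwa [eq_inv_of_mul_eq_one_right hone] at hinv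

/-- The `x`-derivative of the reparameterized formula at a root of `F`. -/
theorem hasDerivAt_Omegaphi1d_of_root {F g φ φinv : ℝ × ℝ → ℝ} {ag mg aF bF : ℝ → ℝ}
    (hag : Differentiable ℝ ag) (hmg : Differentiable ℝ mg)
    (haF : Differentiable ℝ aF) (hbF : Differentiable ℝ bF)
    (hgdef : ∀ x y : ℝ, g (x, y) = ag y * x + mg y)
    (hFdef : ∀ x y : ℝ, F (x, y) = aF y * x + bF y)
    (hφ : ContDiff ℝ (⊤ : ℕ∞) φ) (hφinv : ContDiff ℝ (⊤ : ℕ∞) φinv)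
    (hright : ∀ x y : ℝ, φ (φinv (x, y), y) = x)
    (hphi1 : ∀ z y : ℝ, d1 φ z y ≠ 0) {x y : ℝ} (haF0 : aF y ≠ 0) (hroot : F (x, y) = 0) :
    HasDerivAt (fun x => Omegaphi1d F g φ φinv x y)
      (deriv ag y + (d2 φ (φinv (x, y)) y * d11 φ (φinv (x, y)) y / d1 φ (φinv (x, y)) y ^ 2 +
        d2 F x y * d11 φ (φinv (x, y)) y / (aF y * d1 φ (φinv (x, y)) y ^ 2) -
        d12 φ (φinv (x, y)) y / d1 φ (φinv (x, y)) y - deriv aF y / aF y) * ag y) x := by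
  have hz := hasDerivAt_fibre_inverse hφ hφinv hright x y
  have hc1 := contDiff_d1 hφ
  have hc2 := contDiff_d2 hφ
  have h1 := (hasDerivAt_d1 hc1 (φinv (x, y)) y).comp x hz
  have h2 := (hasDerivAt_d1 hc2 (φinv (x, y)) y).comp x hz
  have h11 := (hasDerivAt_d1 (contDiff_d1 hc1) (φinv (x, y)) y).comp x hz
  have h21 := (hasDerivAt_d1 (contDiff_d1 hc2) (φinv (x, y)) y).comp x hz
  have hF := ((hasDerivAt_id x).const_mul (aF y)).add_const (bF y)
  have hF2 := ((hasDerivAt_id x).const_mul (deriv aF y)).add_const (deriv bF y)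
  have hg2 := ((hasDerivAt_id x).const_mul (deriv ag y)).add_const (deriv mg y)
  have hp := hphi1 (φinv (x, y)) y
  have hroot' : aF y * x + bF y = 0 := by rw [← hFdef, hroot]
  have hU := (hF2.add (h2.const_mul (aF y))).add ((h21.mul hF).div h1 hp)
  have hV := ((h11.mul hF).div (h1.pow 2) (pow_ne_zero 2 hp)).add_const (aF y)
  have hΩ := hg2.add ((h2.sub (hU.div hV (by simpa [hroot'] using haF0))).mul_const (ag y))
  have hs : d1 (fun p => d2 φ p.1 p.2) (φinv (x, y)) y = d12 φ (φinv (x, y)) y :=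
    d21_eq_d12 hφ _ _
  have hd11 : d1 (fun p => d1 φ p.1 p.2) (φinv (x, y)) y = d11 φ (φinv (x, y)) y := rfl
  refine (hΩ.congr_deriv ?_).congr_of_eventuallyEq (Filter.Eventually.of_forall fun x' => ?_)
  · simp only [Pi.add_apply, Pi.mul_apply, Pi.div_apply, Pi.pow_apply, Function.comp_apply, id,
      hs, hd11, hroot', d2_of_affine hFdef haF hbF]
    field_simp
    ring
  · simp only [Omegaphi1d, Psiphi1d, U1d, V1d, d2_of_affine hFdef haF hbF,
      d2_of_affine hgdef hag hmg, d1_of_affine hFdef, d1_of_affine hgdef, hFdef]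
    rfl

/-- 1-D characterization of super-efficiency of the reparameterized formula. -/
theorem stmt9 (F g : ℝ × ℝ → ℝ) (hF : ContDiff ℝ (⊤ : ℕ∞) F) (hg : ContDiff ℝ (⊤ : ℕ∞) g)
    (ag mg aF bF : ℝ → ℝ)
    (hag : ContDiff ℝ (⊤ : ℕ∞) ag) (hmg : ContDiff ℝ (⊤ : ℕ∞) mg)
    (haF : ContDiff ℝ (⊤ : ℕ∞) aF) (hbF : ContDiff ℝ (⊤ : ℕ∞) bF)
    (haF0 : ∀ y : ℝ, aF y ≠ 0) (hag0 : ∀ y : ℝ, ag y ≠ 0)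
    (hgdef : ∀ x y : ℝ, g (x, y) = ag y * x + mg y)
    (hFdef : ∀ x y : ℝ, F (x, y) = aF y * x + bF y)
    (xs : ℝ → ℝ) (hxs : Differentiable ℝ xs)
    (hroot : ∀ y : ℝ, F (xs y, y) = 0)
    (φ : ℝ × ℝ → ℝ) (hφ : ContDiff ℝ (⊤ : ℕ∞) φ)
    (φinv : ℝ × ℝ → ℝ) (hφinv : ContDiff ℝ (⊤ : ℕ∞) φinv)
    (hleft : ∀ z y : ℝ, φinv (φ (z, y), y) = z)
    (hright : ∀ x y : ℝ, φ (φinv (x, y), y) = x)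
    (hphi1 : ∀ z y : ℝ, d1 φ z y ≠ 0)
    (zs : ℝ → ℝ) (hzs : ∀ y : ℝ, zs y = φinv (xs y, y)) :
    (∀ y : ℝ, deriv (fun x => Omegaphi1d F g φ φinv x y) (xs y) = 0) ↔
    (∀ y : ℝ,
      d12 φ (zs y) y / d1 φ (zs y) y -
        d2 φ (zs y) y * d11 φ (zs y) y / (d1 φ (zs y) y) ^ 2 -
        d2 F (xs y) y * d11 φ (zs y) y / (d1 F (xs y) y * (d1 φ (zs y) y) ^ 2) =
      d12 g (xs y) y / d1 g (xs y) y - d12 F (xs y) y / d1 F (xs y) y) := by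
  refine forall_congr' fun y => ?_
  have hdiff {f : ℝ → ℝ} (hf : ContDiff ℝ (⊤ : ℕ∞) f) : Differentiable ℝ f :=
    hf.differentiable (by simp)
  rw [(hasDerivAt_Omegaphi1d_of_root (hdiff hag) (hdiff hmg) (hdiff haF) (hdiff hbF) hgdef hFdef
    hφ hφinv hright hphi1 (haF0 y) (hroot y)).deriv, ← hzs,
    d1_of_affine hFdef, d1_of_affine hgdef, d12_of_affine hFdef, d12_of_affine hgdef]
  have hg0 := hag0 y
  rw [← div_left_inj' hg0, add_div, mul_div_cancel_right₀ _ hg0, zero_div]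
  constructor <;> intro h <;> linear_combination -h
end
end

section
/- (Consistency and efficiency of the localized separable estimator.) For every y ∈ ℝ^{d_y}: (i) Ω^ψ_loc(x⋆(y), y) = ∇h(y); and (ii) the derivative in x at x⋆(y) of the localized map x ↦ Ω^{ψ_{x,y}}(x, y) coincides with the derivative in x at x⋆(y) of the frozen-parameter map x ↦ Ω^{ψ_{x⋆(y),y}}(x, y); in particular their operator norms are equal: C_y(Ω^ψ_loc) = C_y(Ω^{ψ_{x⋆(y),y}}). -/
noncomputable section

open ContinuousLinearMap RealInnerProductSpace

variable {dx dy : ℕ}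

/-- φ₁₁(z,y)[w]: Hessian in z of z ↦ ⟪w, φ(z,y)⟫. -/
def phi11 (φ : E dx × E dy → E dx) (z : E dx) (y : E dy) (w : E dx) : E dx →L[ℝ] E dx :=
  fderiv ℝ (fun z' => gradient (fun z'' => ⟪w, φ (z'', y)⟫) z') z

/-- φ₂₁(z,y)[w]: mixed second derivative of (z,y) ↦ ⟪w, φ(z,y)⟫, an element of ℝ^{dx×dy}. -/
def phi21 (φ : E dx × E dy → E dx) (z : E dx) (y : E dy) (w : E dx) : E dy →L[ℝ] E dx :=
  fderiv ℝ (fun y' => gradient (fun z' => ⟪w, φ (z', y')⟫) z) y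

/-- Uᶠ(x,y) = F₂ + F₁ φ₂(z,y) + φ₁(z,y)⁻¹ (φ₂₁(z,y)[F(x,y)]), with z = φ(·,y)⁻¹(x). -/
def Uphi (F : E dx × E dy → E dx) (φ : E dx × E dy → E dx) (φinv : E dx × E dy → E dx)
    (x : E dx) (y : E dy) : E dy →L[ℝ] E dx :=
  pd2 F x y + (pd1 F x y).comp (pd2 φ (φinv (x, y)) y) +
    (Ring.inverse (pd1 φ (φinv (x, y)) y)).comp (phi21 φ (φinv (x, y)) y (F (x, y)))

/-- Vᶠ(x,y) = (φ₁^⊤)⁻¹ (φ₁₁(z,y)[F(x,y)]) φ₁⁻¹ + F₁(x,y), with z = φ(·,y)⁻¹(x). -/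
def Vphi (F : E dx × E dy → E dx) (φ : E dx × E dy → E dx) (φinv : E dx × E dy → E dx)
    (x : E dx) (y : E dy) : E dx →L[ℝ] E dx :=
  (Ring.inverse (adjoint (pd1 φ (φinv (x, y)) y))).comp
      ((phi11 φ (φinv (x, y)) y (F (x, y))).comp (Ring.inverse (pd1 φ (φinv (x, y)) y))) +
    pd1 F x y

/-- Ψᶠ(x,y) = φ₂(z,y)^⊤ − Uᶠ(x,y)^⊤ (Vᶠ(x,y)^⊤)⁻¹. -/
def Psiphi (F : E dx × E dy → E dx) (φ : E dx × E dy → E dx) (φinv : E dx × E dy → E dx)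
    (x : E dx) (y : E dy) : E dx →L[ℝ] E dy :=
  adjoint (pd2 φ (φinv (x, y)) y) -
    (adjoint (Uphi F φ φinv x y)).comp (Ring.inverse (adjoint (Vphi F φ φinv x y)))

/-- The reparameterized formula Ωᶠ(x,y) = g₂(x,y) + Ψᶠ(x,y) g₁(x,y). -/
def Omegaphi (F : E dx × E dy → E dx) (g : E dx × E dy → ℝ)
    (φ : E dx × E dy → E dx) (φinv : E dx × E dy → E dx) (x : E dx) (y : E dy) : E dy :=
  grad2 g x y + Psiphi F φ φinv x y (grad1 g x y)


/-- Separable localized change of variable ψ_{x̄,ȳ}(z,y) = R(x̄,y) Q(z,ȳ) + x̄. -/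
def psiSep (R : E dx × E dy → (E dx →L[ℝ] E dx)) (Q : E dx × E dy → E dx)
    (xb : E dx) (yb : E dy) : E dx × E dy → E dx :=
  fun p => R (xb, p.2) (Q (p.1, yb)) + xb

/-- Inverse in z of ψ_{x̄,ȳ}(·,y): z = Q(·,ȳ)⁻¹ (R(x̄,y)⁻¹ (x − x̄)). -/
def psiSepInv (R : E dx × E dy → (E dx →L[ℝ] E dx)) (Qinv : E dx × E dy → E dx)
    (xb : E dx) (yb : E dy) : E dx × E dy → E dx :=
  fun p => Qinv (Ring.inverse (R (xb, p.2)) (p.1 - xb), yb)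

/-- The localized estimator Ωᵠ_loc(x,y) = Ω^{ψ_{x,y}}(x,y). -/
def OmegaLoc (F : E dx × E dy → E dx) (g : E dx × E dy → ℝ)
    (R : E dx × E dy → (E dx →L[ℝ] E dx)) (Q Qinv : E dx × E dy → E dx)
    (x : E dx) (y : E dy) : E dy :=
  Omegaphi F g (psiSep R Q x y) (psiSepInv R Qinv x y) x y

open scoped ContDiff

section Smoothness

variable {P : Type*} [NormedAddCommGroup P] [NormedSpace ℝ P]

/-- Taking adjoints preserves smoothness at a point. -/
lemma ContDiffAt.clm_adjoint {m n : ℕ} {A : P → E m →L[ℝ] E n} {p : P}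
    (hA : ContDiffAt ℝ ∞ A p) : ContDiffAt ℝ ∞ (fun q => adjoint (A q)) p := by
  let L : (E m →L[ℝ] E n) →ₗ[ℝ] (E n →L[ℝ] E m) :=
    { toFun := fun B => adjoint B
      map_add' := fun B C => map_add _ B C
      map_smul' := fun c B => by simp }
  exact L.toContinuousLinearMap.contDiff.contDiffAt.comp p hA

/-- `Ring.inverse` preserves smoothness at a point where the value is a unit. -/
lemma ContDiffAt.clm_ringInverse {n : ℕ} {A : P → E n →L[ℝ] E n} {p : P}
    (hA : ContDiffAt ℝ ∞ A p) (hu : IsUnit (A p)) :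
    ContDiffAt ℝ ∞ (fun q => Ring.inverse (A q)) p := by
  obtain ⟨u, hu⟩ := hu
  have := contDiffAt_ringInverse ℝ (n := ∞) u
  rw [hu] at this
  exact this.comp p hA

/-- The gradient of a smooth parametric family, at a smooth base point, is smooth. -/
lemma ContDiff.gradient_family {n : ℕ} {f : P → E n → ℝ} {z : P → E n}
    (hf : ContDiff ℝ ∞ (Function.uncurry f)) (hz : ContDiff ℝ ∞ z) :
    ContDiff ℝ ∞ (fun q => gradient (f q) (z q)) := by
  let L : (E n →L[ℝ] ℝ) →ₗ[ℝ] E n :=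
    { toFun := fun B => (InnerProductSpace.toDual ℝ (E n)).symm B
      map_add' := fun B C => map_add _ B C
      map_smul' := fun c B => by simp }
  exact L.toContinuousLinearMap.contDiff.comp (hf.fderiv hz (by simp))

variable {x z : P → E dx} {y : E dy} {φ : P → E dx × E dy → E dx}

lemma contDiff_pd1 {k : ℕ} {G : P → E dx × E dy → E k}
    (hG : ContDiff ℝ ∞ (Function.uncurry G)) (hz : ContDiff ℝ ∞ z) (y : E dy) :
    ContDiff ℝ ∞ (fun q => pd1 (G q) (z q) y) := by
  unfold pd1
  refine ContDiff.fderiv (f := fun q x' => G q (x', y)) (m := ∞) ?_ hz (by simp)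
  exact hG.comp (contDiff_fst.prodMk (contDiff_snd.prodMk contDiff_const))

lemma contDiff_pd2 {k : ℕ} {G : P → E dx × E dy → E k}
    (hG : ContDiff ℝ ∞ (Function.uncurry G)) (hz : ContDiff ℝ ∞ z) (y : E dy) :
    ContDiff ℝ ∞ (fun q => pd2 (G q) (z q) y) := by
  unfold pd2
  refine ContDiff.fderiv (f := fun q y' => G q (z q, y')) (m := ∞) ?_ contDiff_const (by simp)
  exact hG.comp (contDiff_fst.prodMk ((hz.comp contDiff_fst).prodMk contDiff_snd))

lemma contDiff_phi11 {w : P → E dx} (hφ : ContDiff ℝ ∞ (Function.uncurry φ))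
    (hz : ContDiff ℝ ∞ z) (hw : ContDiff ℝ ∞ w) (y : E dy) :
    ContDiff ℝ ∞ (fun q => phi11 (φ q) (z q) y (w q)) := by
  unfold phi11
  refine ContDiff.fderiv (m := ∞)
    (f := fun q z' => gradient (fun z'' => ⟪w q, φ q (z'', y)⟫) z') ?_ hz (by simp)
  refine ContDiff.gradient_family (P := P × E dx)
    (f := fun r z'' => ⟪w r.1, φ r.1 (z'', y)⟫) (z := fun r => r.2) ?_ contDiff_snd
  exact (hw.comp (contDiff_fst.comp contDiff_fst)).inner ℝ
    (hφ.comp ((contDiff_fst.comp contDiff_fst).prodMk (contDiff_snd.prodMk contDiff_const)))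

lemma contDiff_phi21 {w : P → E dx} (hφ : ContDiff ℝ ∞ (Function.uncurry φ))
    (hz : ContDiff ℝ ∞ z) (hw : ContDiff ℝ ∞ w) (y : E dy) :
    ContDiff ℝ ∞ (fun q => phi21 (φ q) (z q) y (w q)) := by
  unfold phi21
  refine ContDiff.fderiv (m := ∞)
    (f := fun q y' => gradient (fun z' => ⟪w q, φ q (z', y')⟫) (z q)) ?_ contDiff_const (by simp)
  refine ContDiff.gradient_family (P := P × E dy)
    (f := fun r z' => ⟪w r.1, φ r.1 (z', r.2)⟫) (z := fun r => z r.1) ?_ (hz.comp contDiff_fst)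
  exact (hw.comp (contDiff_fst.comp contDiff_fst)).inner ℝ
    (hφ.comp ((contDiff_fst.comp contDiff_fst).prodMk
      (contDiff_snd.prodMk (contDiff_snd.comp contDiff_fst))))

variable {F : E dx × E dy → E dx} {g : E dx × E dy → ℝ} {φinv : P → E dx × E dy → E dx}

/-- The reparameterized estimator depends smoothly on the parameters of the change of variable
and on the base point, wherever the matrices to be inverted are invertible. -/
lemma contDiffAt_Omegaphi (hF : ContDiff ℝ ∞ F) (hg : ContDiff ℝ ∞ g)
    (hx : ContDiff ℝ ∞ x) (hφ : ContDiff ℝ ∞ (Function.uncurry φ))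
    (hz : ContDiff ℝ ∞ (fun q => φinv q (x q, y))) {p : P}
    (hφ1 : IsUnit (pd1 (φ p) (φinv p (x p, y)) y))
    (hV : IsUnit (Vphi F (φ p) (φinv p) (x p) y)) :
    ContDiffAt ℝ ∞ (fun q => Omegaphi F g (φ q) (φinv q) (x q) y) p := by
  have hFc : ContDiff ℝ ∞ (Function.uncurry fun _ : P => F) := hF.comp contDiff_snd
  have hFx : ContDiff ℝ ∞ (fun q => F (x q, y)) := hF.comp (hx.prodMk contDiff_const)
  have hF1 := (contDiff_pd1 hFc hx y).contDiffAt (x := p)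
  have hF2 := (contDiff_pd2 hFc hx y).contDiffAt (x := p)
  have hp1 := (contDiff_pd1 hφ hz y).contDiffAt (x := p)
  have hp2 := (contDiff_pd2 hφ hz y).contDiffAt (x := p)
  have hp11 := (contDiff_phi11 hφ hz hFx y).contDiffAt (x := p)
  have hp21 := (contDiff_phi21 hφ hz hFx y).contDiffAt (x := p)
  have hi := hp1.clm_ringInverse hφ1
  have hU : ContDiffAt ℝ ∞ (fun q => Uphi F (φ q) (φinv q) (x q) y) p :=
    (hF2.add (hF1.clm_comp hp2)).add (hi.clm_comp hp21)
  have hV' : ContDiffAt ℝ ∞ (fun q => Vphi F (φ q) (φinv q) (x q) y) p :=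
    ((hp1.clm_adjoint.clm_ringInverse hφ1.star).clm_comp
      (hp11.clm_comp hi)).add hF1
  have hPsi : ContDiffAt ℝ ∞ (fun q => Psiphi F (φ q) (φinv q) (x q) y) p :=
    hp2.clm_adjoint.sub (hU.clm_adjoint.clm_comp
      (hV'.clm_adjoint.clm_ringInverse hV.star))
  have hg1 : ContDiff ℝ ∞ (fun q => grad1 g (x q) y) :=
    ContDiff.gradient_family (f := fun _ x' => g (x', y))
      (hg.comp (contDiff_snd.prodMk contDiff_const)) hx
  have hg2 : ContDiff ℝ ∞ (fun q => grad2 g (x q) y) :=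
    ContDiff.gradient_family (f := fun q y' => g (x q, y')) (z := fun _ => y)
      (hg.comp ((hx.comp contDiff_fst).prodMk contDiff_snd)) contDiff_const
  exact hg2.contDiffAt.add (hPsi.clm_apply hg1.contDiffAt)

end Smoothness

/-- At a root of `F(·, y)`, the matrix `V` does not depend on the change of variable. -/
lemma Vphi_of_root {F φ φinv : E dx × E dy → E dx} {x : E dx} {y : E dy} (h0 : F (x, y) = 0) :
    Vphi F φ φinv x y = pd1 F x y := by
  simp [Vphi, phi11, h0, gradient]

/-- At a root of `F(·, y)`, every reparameterized estimator equals the implicit one. -/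
lemma Omegaphi_of_root {F : E dx × E dy → E dx} (g : E dx × E dy → ℝ)
    (φ φinv : E dx × E dy → E dx) {x : E dx} {y : E dy} (h0 : F (x, y) = 0)
    (hu : IsUnit (pd1 F x y)) : Omegaphi F g φ φinv x y = Omega F g x y := by
  have hu' : IsUnit (adjoint (pd1 F x y)) := hu.star
  have hc : (adjoint (pd1 F x y)).comp (Ring.inverse (adjoint (pd1 F x y))) =
      ContinuousLinearMap.id ℝ _ := Ring.mul_inverse_cancel _ hu'
  have hU : Uphi F φ φinv x y = pd2 F x y + (pd1 F x y).comp (pd2 φ (φinv (x, y)) y) := by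
    simp [Uphi, phi21, h0, gradient]
  simp only [Omegaphi, Omega, Psiphi, Psi, Vphi_of_root h0, hU, map_add, adjoint_comp, add_comp,
    comp_assoc, hc, comp_id]
  congr 2
  abel

/-- The implicit-function formula for the gradient of `y ↦ g (x⋆ y, y)`. -/
lemma Omega_eq_gradient {F : E dx × E dy → E dx} {g : E dx × E dy → ℝ}
    (hF : Differentiable ℝ F) (hg : Differentiable ℝ g) {xs : E dy → E dx}
    (hxs : Differentiable ℝ xs) (hroot : ∀ y, F (xs y, y) = 0) {y : E dy}
    (hu : IsUnit (pd1 F (xs y) y)) :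
    Omega F g (xs y) y = gradient (fun y' => g (xs y', y')) y := by
  have hl (x : E dx) : HasFDerivAt (fun x' => (x', y)) (.inl ℝ (E dx) (E dy)) x :=
    hasFDerivAt_prodMk_left x y
  have hr : HasFDerivAt (fun y' => (xs y, y')) (.inr ℝ (E dx) (E dy)) y :=
    hasFDerivAt_prodMk_right (xs y) y
  have hF1 : pd1 F (xs y) y = (fderiv ℝ F (xs y, y)).comp (.inl ℝ _ _) :=
    ((hF _).hasFDerivAt.comp (xs y) (hl _)).fderiv
  have hF2 : pd2 F (xs y) y = (fderiv ℝ F (xs y, y)).comp (.inr ℝ _ _) :=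
    ((hF _).hasFDerivAt.comp y hr).fderiv
  have hg1 : fderiv ℝ (fun x' => g (x', y)) (xs y) = (fderiv ℝ g (xs y, y)).comp (.inl ℝ _ _) :=
    ((hg _).hasFDerivAt.comp (xs y) (hl _)).fderiv
  have hg2 : fderiv ℝ (fun y' => g (xs y, y')) y = (fderiv ℝ g (xs y, y)).comp (.inr ℝ _ _) :=
    ((hg _).hasFDerivAt.comp y hr).fderiv
  have hgraph : HasFDerivAt (fun y' => (xs y', y'))
      ((fderiv ℝ xs y).prod (ContinuousLinearMap.id ℝ _)) y :=
    (hxs y).hasFDerivAt.prodMk (hasFDerivAt_id y)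
  have hh : fderiv ℝ (fun y' => g (xs y', y')) y = (fderiv ℝ g (xs y, y)).comp
      ((fderiv ℝ xs y).prod (ContinuousLinearMap.id ℝ _)) :=
    ((hg (xs y, y)).hasFDerivAt.comp (f := fun y' => (xs y', y')) y hgraph).fderiv
  have hFD : (fderiv ℝ F (xs y, y)).comp
      ((fderiv ℝ xs y).prod (ContinuousLinearMap.id ℝ _)) = 0 := by
    refine ((hF (xs y, y)).hasFDerivAt.comp (f := fun y' => (xs y', y')) y hgraph).unique ?_
    exact (hasFDerivAt_const (0 : E dx) y).congr_of_eventuallyEq (.of_forall hroot)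
  have split (v : E dy) : ((fderiv ℝ xs y v, v) : E dx × E dy) =
      ContinuousLinearMap.inl ℝ _ _ (fderiv ℝ xs y v) + ContinuousLinearMap.inr ℝ _ _ v := by simp
  have hF2' : pd2 F (xs y) y = -(pd1 F (xs y) y).comp (fderiv ℝ xs y) := by
    ext1 v
    have := DFunLike.congr_fun hFD v
    simp only [comp_apply, prod_apply, id_apply, split, map_add, zero_apply] at this
    simp only [hF1, hF2, neg_apply, comp_apply]
    exact eq_neg_of_add_eq_zero_right this
  have hPsi : Psi F (xs y) y = adjoint (fderiv ℝ xs y) := by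
    have hc : (adjoint (pd1 F (xs y) y)).comp (Ring.inverse (adjoint (pd1 F (xs y) y))) =
      ContinuousLinearMap.id ℝ _ := Ring.mul_inverse_cancel _ hu.star
    rw [Psi, hF2', map_neg, adjoint_comp, neg_comp, comp_assoc, hc, comp_id, neg_neg]
  refine ext_inner_right ℝ fun v => ?_
  simp only [Omega, hPsi, inner_add_left, adjoint_inner_left, grad1, grad2, gradient,
    InnerProductSpace.toDual_symm_apply, hg1, hg2, hh, comp_apply, prod_apply, id_apply, split,
    map_add]
  exact add_comm _ _

/-- If `Θ` is differentiable at `(a, a)` and `Θ(·, a)` is constant, then the diagonal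
`t ↦ Θ(t, t)` and the slice `Θ(a, ·)` have the same derivative at `a`. -/
lemma fderiv_diag_eq_fderiv_slice {V W : Type*} [NormedAddCommGroup V] [NormedSpace ℝ V]
    [NormedAddCommGroup W] [NormedSpace ℝ W] {Θ : V × V → W} {a : V}
    (hΘ : DifferentiableAt ℝ Θ (a, a)) (hconst : ∀ t, Θ (t, a) = Θ (a, a)) :
    fderiv ℝ (fun t => Θ (t, t)) a = fderiv ℝ (fun t => Θ (a, t)) a := by
  have hd := (hΘ.hasFDerivAt.comp (f := fun t => (t, t)) a
    ((hasFDerivAt_id a).prodMk (hasFDerivAt_id a))).fderiv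
  have hs := (hΘ.hasFDerivAt.comp a (hasFDerivAt_prodMk_right a a)).fderiv
  have hz : (fderiv ℝ Θ (a, a)).comp (.inl ℝ V V) = 0 := by
    refine (hΘ.hasFDerivAt.comp (f := fun t => (t, a)) a (hasFDerivAt_prodMk_left a a)).unique ?_
    exact (hasFDerivAt_const (Θ (a, a)) a).congr_of_eventuallyEq (.of_forall hconst)
  refine hd.trans (Eq.trans ?_ hs.symm)
  ext v
  have hv := DFunLike.congr_fun hz v
  have hsum : ((v, v) : V × V) = ContinuousLinearMap.inl ℝ V V v +
    ContinuousLinearMap.inr ℝ V V v := by simp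
  simp only [comp_apply, zero_apply] at hv
  simp [hsum, map_add, hv, -inl_apply, -inr_apply]

/-- The Jacobian in `z` of the separable change of variable is invertible. -/
lemma isUnit_pd1_psiSep {R : E dx × E dy → (E dx →L[ℝ] E dx)} {Q : E dx × E dy → E dx}
    (hQ : Differentiable ℝ Q) {xb z : E dx} {yb y : E dy} (hR : IsUnit (R (xb, y)))
    (hQ1 : IsUnit (pd1 Q z yb)) : IsUnit (pd1 (psiSep R Q xb yb) z y) := by
  have hq : HasFDerivAt (fun z' => Q (z', yb)) (pd1 Q z yb) z :=
    (hQ.comp (differentiable_id.prodMk (differentiable_const yb)) z).hasFDerivAt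
  have hpd : pd1 (psiSep R Q xb yb) z y = R (xb, y) * pd1 Q z yb :=
    (((R (xb, y)).hasFDerivAt.comp z hq).add_const xb).fderiv
  exact hpd ▸ hR.mul hQ1

/-- consistency and efficiency of the localized separable estimator. -/
theorem stmt11 (dx dy : ℕ) (hdx : 0 < dx) (hdy : 0 < dy)
    (F : E dx × E dy → E dx) (g : E dx × E dy → ℝ)
    (hF : ContDiff ℝ (⊤ : ℕ∞) F) (hg : ContDiff ℝ (⊤ : ℕ∞) g)
    (hinv : ∀ (x : E dx) (y : E dy), IsUnit (pd1 F x y))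
    (xs : E dy → E dx) (hxs : Differentiable ℝ xs)
    (hroot : ∀ y : E dy, F (xs y, y) = 0)
    (h : E dy → ℝ) (hh : ∀ y : E dy, h y = g (xs y, y))
    (R : E dx × E dy → (E dx →L[ℝ] E dx)) (hR : ContDiff ℝ (⊤ : ℕ∞) R)
    (hRinv : ∀ (x : E dx) (y : E dy), IsUnit (R (x, y)))
    (Q : E dx × E dy → E dx) (hQ : ContDiff ℝ (⊤ : ℕ∞) Q)
    (Qinv : E dx × E dy → E dx) (hQinv : ContDiff ℝ (⊤ : ℕ∞) Qinv)
    (hleft : ∀ (z : E dx) (yb : E dy), Qinv (Q (z, yb), yb) = z)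
    (hright : ∀ (w : E dx) (yb : E dy), Q (Qinv (w, yb), yb) = w)
    (hQ1 : ∀ (z : E dx) (yb : E dy), IsUnit (pd1 Q z yb)) :
    ∀ y : E dy,
      OmegaLoc F g R Q Qinv (xs y) y = gradient h y ∧
      fderiv ℝ (fun x => OmegaLoc F g R Q Qinv x y) (xs y) =
        fderiv ℝ (fun x =>
          Omegaphi F g (psiSep R Q (xs y) y) (psiSepInv R Qinv (xs y) y) x y) (xs y) ∧
      ‖fderiv ℝ (fun x => OmegaLoc F g R Q Qinv x y) (xs y)‖ =
        ‖fderiv ℝ (fun x =>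
          Omegaphi F g (psiSep R Q (xs y) y) (psiSepInv R Qinv (xs y) y) x y) (xs y)‖ := by
  intro y
  have hval (φ φinv : E dx × E dy → E dx) :
      Omegaphi F g φ φinv (xs y) y = Omega F g (xs y) y :=
    Omegaphi_of_root g φ φinv (hroot y) (hinv _ _)
  let Θ : E dx × E dx → E dy := fun q =>
    Omegaphi F g (psiSep R Q q.1 y) (psiSepInv R Qinv q.1 y) q.2 y
  have hΘ : ContDiffAt ℝ ∞ Θ (xs y, xs y) := by
    have hψ : ContDiff ℝ ∞ (Function.uncurry fun q : E dx × E dx => psiSep R Q q.1 y) := by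
      unfold psiSep Function.uncurry
      dsimp only
      fun_prop
    have hRi : ContDiff ℝ ∞ (fun q : E dx × E dx => Ring.inverse (R (q.1, y))) :=
      contDiff_iff_contDiffAt.2 fun q =>
        (hR.comp (contDiff_fst.prodMk contDiff_const)).contDiffAt.clm_ringInverse (hRinv _ _)
    have hz : ContDiff ℝ ∞ (fun q : E dx × E dx => psiSepInv R Qinv q.1 y (q.2, y)) :=
      hQinv.comp ((hRi.clm_apply (contDiff_snd.sub contDiff_fst)).prodMk contDiff_const)
    refine contDiffAt_Omegaphi hF hg contDiff_snd hψ hz ?_ ?_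
    · exact isUnit_pd1_psiSep (hQ.differentiable (by simp)) (hRinv _ _) (hQ1 _ _)
    · rw [Vphi_of_root (hroot y)]
      exact hinv _ _
  have hderiv : fderiv ℝ (fun x => OmegaLoc F g R Q Qinv x y) (xs y) =
      fderiv ℝ (fun x =>
        Omegaphi F g (psiSep R Q (xs y) y) (psiSepInv R Qinv (xs y) y) x y) (xs y) :=
    fderiv_diag_eq_fderiv_slice (hΘ.differentiableAt (by simp))
      fun t => (hval _ _).trans (hval _ _).symm
  refine ⟨?_, hderiv, congrArg _ hderiv⟩
  rw [funext hh, OmegaLoc, hval]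
  exact Omega_eq_gradient (hF.differentiable (by simp)) (hg.differentiable (by simp)) hxs hroot
    (hinv _ _)
end
end

section
/- (Newton-like reparameterization is super-efficient.) Assume g(x, y) = ⟨a, x⟩ + m(y) for a fixed a ∈ ℝ^{d_x} and a smooth m, that F_1(x, y) is symmetric for all (x, y), and that F(·, y) is a bijection of ℝ^{d_x} for every y. Take R(x, y) := F_1(x, y)^{−1} and Q(z, ȳ) := −F(z, ȳ), so ψ_{x̄,ȳ}(z, y) = −F_1(x̄, y)^{−1} F(z, ȳ) + x̄. Then for every y ∈ ℝ^{d_y}, the frozen-parameter map x ↦ Ω^{ψ_{x⋆(y),y}}(x, y) has vanishing derivative in x at x⋆(y): D_xΩ^{ψ_{x⋆(y),y}}(x⋆(y), y) = 0; hence the localized estimator Ω^ψ_loc is super-efficient. -/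
noncomputable section

open ContinuousLinearMap RealInnerProductSpace

variable {dx dy : ℕ}

open scoped ContDiff

section PartialDerivatives

variable {F : E dx × E dy → E dx}

lemma pd1_eq_fderiv_comp_inl (hF : ContDiff ℝ ∞ F) (x : E dx) (y : E dy) :
    pd1 F x y = (fderiv ℝ F (x, y)).comp (inl ℝ (E dx) (E dy)) :=
  (((hF.differentiable (by simp)) (x, y)).hasFDerivAt.comp x
    (hasFDerivAt_prodMk_left x y)).fderiv

lemma pd2_eq_fderiv_comp_inr (hF : ContDiff ℝ ∞ F) (x : E dx) (y : E dy) :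
    pd2 F x y = (fderiv ℝ F (x, y)).comp (inr ℝ (E dx) (E dy)) :=
  (((hF.differentiable (by simp)) (x, y)).hasFDerivAt.comp y
    (hasFDerivAt_prodMk_right x y)).fderiv

lemma contDiff_pd1_s12 (hF : ContDiff ℝ ∞ F) :
    ContDiff ℝ ∞ (fun q : E dx × E dy => pd1 F q.1 q.2) := by
  simp only [pd1_eq_fderiv_comp_inl hF]
  exact (hF.fderiv_right (m := ∞) (by simp)).clm_comp contDiff_const

lemma contDiff_pd2_s12 (hF : ContDiff ℝ ∞ F) :
    ContDiff ℝ ∞ (fun q : E dx × E dy => pd2 F q.1 q.2) := by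
  simp only [pd2_eq_fderiv_comp_inr hF]
  exact (hF.fderiv_right (m := ∞) (by simp)).clm_comp contDiff_const

lemma hasFDerivAt_fderiv (hF : ContDiff ℝ ∞ F) (q : E dx × E dy) :
    HasFDerivAt (fderiv ℝ F) (fderiv ℝ (fderiv ℝ F) q) q :=
  ((hF.fderiv_right (m := ∞) (by simp)).differentiable (by simp) q).hasFDerivAt

lemma fderiv_pd1_fst_apply (hF : ContDiff ℝ ∞ F) (x : E dx) (y : E dy) (h k : E dx) :
    fderiv ℝ (fun x' => pd1 F x' y) x h k = fderiv ℝ (fderiv ℝ F) (x, y) (h, 0) (k, 0) := by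
  simp only [pd1_eq_fderiv_comp_inl hF]
  rw [(((hasFDerivAt_fderiv hF (x, y)).comp x (hasFDerivAt_prodMk_left x y)).clm_comp
    (hasFDerivAt_const (inl ℝ (E dx) (E dy)) x)).fderiv]
  simp

lemma fderiv_pd1_snd_apply (hF : ContDiff ℝ ∞ F) (x : E dx) (y : E dy) (v : E dy) (k : E dx) :
    fderiv ℝ (fun y' => pd1 F x y') y v k = fderiv ℝ (fderiv ℝ F) (x, y) (0, v) (k, 0) := by
  simp only [pd1_eq_fderiv_comp_inl hF]
  have h : HasFDerivAt (fun y' => fderiv ℝ F (x, y')) _ y :=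
    (hasFDerivAt_fderiv hF (x, y)).comp y (hasFDerivAt_prodMk_right x y)
  rw [(h.clm_comp (hasFDerivAt_const (inl ℝ (E dx) (E dy)) y)).fderiv]
  simp

lemma fderiv_pd2_fst_apply (hF : ContDiff ℝ ∞ F) (x : E dx) (y : E dy) (h : E dx) (v : E dy) :
    fderiv ℝ (fun x' => pd2 F x' y) x h v = fderiv ℝ (fderiv ℝ F) (x, y) (h, 0) (0, v) := by
  simp only [pd2_eq_fderiv_comp_inr hF]
  rw [(((hasFDerivAt_fderiv hF (x, y)).comp x (hasFDerivAt_prodMk_left x y)).clm_comp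
    (hasFDerivAt_const (inr ℝ (E dx) (E dy)) x)).fderiv]
  simp

lemma isSymmSndFDerivAt (hF : ContDiff ℝ ∞ F) (q : E dx × E dy) :
    IsSymmSndFDerivAt ℝ F q :=
  hF.contDiffAt.isSymmSndFDerivAt (by simpa using WithTop.coe_le_coe.2 (le_top : (2 : ℕ∞) ≤ ⊤))

lemma fderiv_pd1_fst_symm (hF : ContDiff ℝ ∞ F) (x : E dx) (y : E dy) (h k : E dx) :
    fderiv ℝ (fun x' => pd1 F x' y) x h k = fderiv ℝ (fun x' => pd1 F x' y) x k h := by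
  rw [fderiv_pd1_fst_apply hF, fderiv_pd1_fst_apply hF, isSymmSndFDerivAt hF (x, y)]

lemma fderiv_pd2_fst_eq_fderiv_pd1_snd (hF : ContDiff ℝ ∞ F) (x : E dx) (y : E dy)
    (h : E dx) (v : E dy) :
    fderiv ℝ (fun x' => pd2 F x' y) x h v = fderiv ℝ (fun y' => pd1 F x y') y v h := by
  rw [fderiv_pd2_fst_apply hF, fderiv_pd1_snd_apply hF, isSymmSndFDerivAt hF (x, y)]

end PartialDerivatives

section NewtonReparameterization

variable {F : E dx × E dy → E dx} {R : E dx × E dy → (E dx →L[ℝ] E dx)}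

lemma contDiff_inverse_pd1 (hF : ContDiff ℝ ∞ F)
    (hinv : ∀ (x : E dx) (y : E dy), IsUnit (pd1 F x y)) :
    ContDiff ℝ ∞ (fun q : E dx × E dy => Ring.inverse (pd1 F q.1 q.2)) := by
  rw [contDiff_iff_contDiffAt]
  intro q
  obtain ⟨u, hu⟩ := hinv q.1 q.2
  have h := contDiffAt_ringInverse ℝ (n := ∞) u
  rw [hu] at h
  exact h.comp q (contDiff_pd1_s12 hF).contDiffAt

lemma fderiv_inverse_pd1_snd_apply (hF : ContDiff ℝ ∞ F)
    (hinv : ∀ (x : E dx) (y : E dy), IsUnit (pd1 F x y)) (x : E dx) (y : E dy) (v : E dy) :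
    fderiv ℝ (fun y' => Ring.inverse (pd1 F x y')) y v =
      -(Ring.inverse (pd1 F x y) * fderiv ℝ (fun y' => pd1 F x y') y v *
        Ring.inverse (pd1 F x y)) := by
  obtain ⟨u, hu⟩ := hinv x y
  have h := hasFDerivAt_ringInverse (𝕜 := ℝ) u
  rw [hu] at h
  have hd : HasFDerivAt (fun y' => pd1 F x y') (fderiv ℝ (fun y' => pd1 F x y') y) y :=
    (((contDiff_pd1_s12 hF).comp (contDiff_const.prodMk contDiff_id)).differentiable
      (by simp) y).hasFDerivAt
  have e := (h.comp y hd).fderiv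
  simp only [Function.comp_def] at e
  rw [e, ← hu, Ring.inverse_unit]
  simp

lemma pd1_psiSep (hF : ContDiff ℝ ∞ F) (p z : E dx) (y : E dy) :
    pd1 (psiSep R (fun q => -F q) p y) z y = -((R (p, y)).comp (pd1 F z y)) := by
  have hd : HasFDerivAt (fun x' => F (x', y)) (pd1 F z y) z :=
    (((hF.comp (contDiff_id.prodMk contDiff_const)).differentiable (by simp)) z).hasFDerivAt
  have := (((R (p, y)).hasFDerivAt.comp z hd.fun_neg).add_const p).fderiv
  simp only [Function.comp_def] at this
  simp only [pd1, psiSep] at this ⊢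
  rw [this]
  simp

lemma hasFDerivAt_comp_mk_right (hR : ContDiff ℝ ∞ R) (p : E dx) (y : E dy) :
    HasFDerivAt (fun y' => R (p, y')) (fderiv ℝ (fun y' => R (p, y')) y) y :=
  ((hR.comp (contDiff_const.prodMk contDiff_id)).differentiable (by simp) y).hasFDerivAt

lemma pd2_psiSep (hR : ContDiff ℝ ∞ R) (p z : E dx) (y : E dy) :
    pd2 (psiSep R (fun q => -F q) p y) z y =
      -((fderiv ℝ (fun y' => R (p, y')) y).flip (F (z, y))) := by
  have := (((hasFDerivAt_comp_mk_right hR p y).clm_apply (hasFDerivAt_const (-F (z, y)) y)).add_const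
    p).fderiv
  simp only [pd2, psiSep] at this ⊢
  rw [this]
  ext v
  simp

lemma gradient_inner_psiSep (hF : ContDiff ℝ ∞ F)
    (hsym : ∀ (x : E dx) (y : E dy), adjoint (pd1 F x y) = pd1 F x y)
    (hRsym : ∀ q, adjoint (R q) = R q) (p z w : E dx) (y y' : E dy) :
    gradient (fun z' => ⟪w, psiSep R (fun q => -F q) p y (z', y')⟫) z =
      -(pd1 F z y (R (p, y') w)) := by
  have hd : HasFDerivAt (fun x' => F (x', y)) (pd1 F z y) z :=
    (((hF.comp (contDiff_id.prodMk contDiff_const)).differentiable (by simp)) z).hasFDerivAt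
  have hφ := ((R (p, y')).hasFDerivAt.comp z hd.fun_neg).add_const p
  have h := (innerSL ℝ w).hasFDerivAt.comp z hφ
  refine HasGradientAt.gradient (hasGradientAt_iff_hasFDerivAt.2 ?_)
  convert! h using 1
  ext v
  simp [← adjoint_inner_left, hsym, hRsym]

lemma phi11_psiSep (hF : ContDiff ℝ ∞ F)
    (hsym : ∀ (x : E dx) (y : E dy), adjoint (pd1 F x y) = pd1 F x y)
    (hRsym : ∀ q, adjoint (R q) = R q) (p z w : E dx) (y : E dy) :
    phi11 (psiSep R (fun q => -F q) p y) z y w =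
      -((fderiv ℝ (fun x' => pd1 F x' y) z).flip (R (p, y) w)) := by
  have hd : HasFDerivAt (fun x' => pd1 F x' y) (fderiv ℝ (fun x' => pd1 F x' y) z) z :=
    (((contDiff_pd1_s12 hF).comp (contDiff_id.prodMk contDiff_const)).differentiable
      (by simp) z).hasFDerivAt
  simp only [phi11, gradient_inner_psiSep hF hsym hRsym]
  rw [((hd.clm_apply (hasFDerivAt_const (R (p, y) w) z)).fun_neg).fderiv]
  ext v
  simp

lemma phi21_psiSep (hF : ContDiff ℝ ∞ F) (hR : ContDiff ℝ ∞ R)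
    (hsym : ∀ (x : E dx) (y : E dy), adjoint (pd1 F x y) = pd1 F x y)
    (hRsym : ∀ q, adjoint (R q) = R q) (p z w : E dx) (y : E dy) :
    phi21 (psiSep R (fun q => -F q) p y) z y w =
      -((pd1 F z y).comp ((fderiv ℝ (fun y' => R (p, y')) y).flip w)) := by
  simp only [phi21, gradient_inner_psiSep hF hsym hRsym]
  have h : HasFDerivAt (fun y' => pd1 F z y (R (p, y') w)) _ y :=
    (pd1 F z y).hasFDerivAt.comp y ((hasFDerivAt_comp_mk_right hR p y).clm_apply
      (hasFDerivAt_const w y))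
  rw [h.fun_neg.fderiv]
  ext v
  simp

end NewtonReparameterization

section VanishingDerivative

/-- If the right factor of a composition vanishes at `s`, only its derivative contributes. -/
lemma HasFDerivAt.clm_comp_of_eq_zero {X G H K : Type*}
    [NormedAddCommGroup X] [NormedSpace ℝ X] [NormedAddCommGroup G] [NormedSpace ℝ G]
    [NormedAddCommGroup H] [NormedSpace ℝ H] [NormedAddCommGroup K] [NormedSpace ℝ K]
    {c : X → H →L[ℝ] K} {d : X → G →L[ℝ] H} {d' : X →L[ℝ] G →L[ℝ] H} {s : X}
    (hc : DifferentiableAt ℝ c s) (hd : HasFDerivAt d d' s) (hs : d s = 0) :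
    HasFDerivAt (fun x => (c x).comp (d x)) ((compL ℝ G H K (c s)).comp d') s := by
  convert! hc.hasFDerivAt.clm_comp hd using 1
  ext
  simp [hs]

lemma HasFDerivAt.adjoint_apply_of_zero {X : Type*} [NormedAddCommGroup X] [NormedSpace ℝ X]
    {T : X → E dy →L[ℝ] E dx} {s : X} (hT : HasFDerivAt T (0 : X →L[ℝ] E dy →L[ℝ] E dx) s) (a : E dx) :
    HasFDerivAt (fun x => adjoint (T x) a) (0 : X →L[ℝ] E dy) s := by
  refine .of_isLittleO (Asymptotics.IsBigO.trans_isLittleO ?_ hT.isLittleO)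
  refine .of_bound ‖a‖ (.of_forall fun x => ?_)
  simp only [zero_apply, sub_zero]
  rw [← sub_apply, ← map_sub, mul_comm, ← LinearIsometryEquiv.norm_map adjoint (T x - T s)]
  exact (adjoint (T x - T s)).le_opNorm a

end VanishingDerivative

section SuperEfficiency

variable {F : E dx × E dy → E dx} {R : E dx × E dy → (E dx →L[ℝ] E dx)}
  {p z : E dx → E dx} {s : E dx} {y : E dy}

lemma differentiable_comp_mk_left {G : Type*} [NormedAddCommGroup G] [NormedSpace ℝ G]
    {f : E dx × E dy → G} (hf : ContDiff ℝ ∞ f) (y : E dy) :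
    Differentiable ℝ (fun x => f (x, y)) :=
  (hf.comp (contDiff_id.prodMk contDiff_const)).differentiable (by simp)

lemma differentiableAt_clm_flip {X G H K : Type*}
    [NormedAddCommGroup X] [NormedSpace ℝ X] [NormedAddCommGroup G] [NormedSpace ℝ G]
    [NormedAddCommGroup H] [NormedSpace ℝ H] [NormedAddCommGroup K] [NormedSpace ℝ K]
    {c : X → G →L[ℝ] H →L[ℝ] K} {s : X} (hc : DifferentiableAt ℝ c s) :
    DifferentiableAt ℝ (fun x => (c x).flip) s := by
  let L : (G →L[ℝ] H →L[ℝ] K) →L[ℝ] (H →L[ℝ] G →L[ℝ] K) :=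
    (flipₗᵢ ℝ G H K).toContinuousLinearEquiv.toContinuousLinearMap
  exact DifferentiableAt.comp (𝕜 := ℝ) (E := X) (F := G →L[ℝ] H →L[ℝ] K)
    (G := H →L[ℝ] G →L[ℝ] K) s L.differentiableAt hc

/-- If `w` vanishes at `s`, only its derivative contributes to that of `x ↦ (c x).flip (w x)`. -/
lemma HasFDerivAt.flip_apply_of_eq_zero {X G H K : Type*}
    [NormedAddCommGroup X] [NormedSpace ℝ X] [NormedAddCommGroup G] [NormedSpace ℝ G]
    [NormedAddCommGroup H] [NormedSpace ℝ H] [NormedAddCommGroup K] [NormedSpace ℝ K]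
    {c : X → G →L[ℝ] H →L[ℝ] K} {w : X → H} {w' : X →L[ℝ] H} {s : X}
    (hc : DifferentiableAt ℝ c s) (hw : HasFDerivAt w w' s) (hs : w s = 0) :
    HasFDerivAt (fun x => (c x).flip (w x)) ((c s).flip.comp w') s := by
  convert! (differentiableAt_clm_flip hc).hasFDerivAt.clm_apply hw using 1
  ext
  simp [hs]

lemma differentiableAt_ringInverse_comp {X : Type*} [NormedAddCommGroup X] [NormedSpace ℝ X]
    {c : X → E dx →L[ℝ] E dx} {s : X} (hc : DifferentiableAt ℝ c s) (hu : IsUnit (c s)) :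
    DifferentiableAt ℝ (fun x => Ring.inverse (c x)) s :=
  (differentiableAt_inverse hu).comp s hc

lemma neg_one_mul_neg_one_clm : (-1 : E dx →L[ℝ] E dx) * -1 = 1 := by
  ext1 w
  exact neg_neg w

lemma isUnit_neg_one_clm : IsUnit (-1 : E dx →L[ℝ] E dx) :=
  ⟨⟨-1, -1, neg_one_mul_neg_one_clm, neg_one_mul_neg_one_clm⟩, rfl⟩

lemma inverse_neg_one_clm : Ring.inverse (-1 : E dx →L[ℝ] E dx) = -1 :=
  Ring.inverse_unit (⟨-1, -1, neg_one_mul_neg_one_clm, neg_one_mul_neg_one_clm⟩ :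
    (E dx →L[ℝ] E dx)ˣ)

lemma hasFDerivAt_Uphi_psiSep (hF : ContDiff ℝ ∞ F)
    (hinv : ∀ (x : E dx) (y : E dy), IsUnit (pd1 F x y))
    (hsym : ∀ (x : E dx) (y : E dy), adjoint (pd1 F x y) = pd1 F x y)
    (hR : ∀ x y, R (x, y) = Ring.inverse (pd1 F x y))
    (hRc : ContDiff ℝ ∞ R) (hRsym : ∀ q, adjoint (R q) = R q)
    (hp : DifferentiableAt ℝ p s) (hz : DifferentiableAt ℝ z s) (hps : p s = s) (hzs : z s = s)
    (hs : F (s, y) = 0) {P' : E dx →L[ℝ] E dy →L[ℝ] E dx}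
    (hP : HasFDerivAt (fun x => pd2 (psiSep R (fun q => -F q) (p x) y) (z x) y) P' s) :
    HasFDerivAt (fun x => Uphi F (psiSep R (fun q => -F q) (p x) y) (fun _ => z x) x y)
      ((compL ℝ (E dy) (E dx) (E dx) (pd1 F s y)).comp P') s := by
  have hA : Differentiable ℝ (fun x => pd1 F x y) :=
    differentiable_comp_mk_left (contDiff_pd1_s12 hF) y
  have hF2 : Differentiable ℝ (fun x => pd2 F x y) :=
    differentiable_comp_mk_left (contDiff_pd2_s12 hF) y
  have hf : HasFDerivAt (fun x => F (x, y)) (pd1 F s y) s :=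
    (differentiable_comp_mk_left hF y s).hasFDerivAt
  have hDR : Differentiable ℝ (fun x => fderiv ℝ (fun y' => R (x, y')) y) :=
    (ContDiff.fderiv (m := ∞) (n := ∞) (f := fun x y' => R (x, y')) hRc contDiff_const
      (by simp)).differentiable (by simp)
  have hAz : DifferentiableAt ℝ (fun x => pd1 F (z x) y) s :=
    DifferentiableAt.comp s (g := fun x => pd1 F x y) (hA _) hz
  have hRp : DifferentiableAt ℝ (fun x => R (p x, y)) s :=
    DifferentiableAt.comp s (g := fun x => R (x, y)) (differentiable_comp_mk_left hRc y _) hp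
  have hDRp : DifferentiableAt ℝ (fun x => fderiv ℝ (fun y' => R (p x, y')) y) s :=
    DifferentiableAt.comp s (g := fun x => fderiv ℝ (fun y' => R (x, y')) y) (hDR _) hp
  have hone : -((R (p s, y)).comp (pd1 F (z s) y)) = -1 := by
    rw [hps, hzs, hR]
    exact congrArg _ (Ring.inverse_mul_cancel _ (hinv s y))
  have hK := differentiableAt_ringInverse_comp (hRp.clm_comp hAz).fun_neg
    (hone ▸ isUnit_neg_one_clm)
  have hM := hK.clm_comp hAz.fun_neg
  have hflip := HasFDerivAt.flip_apply_of_eq_zero hDRp hf hs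
  have hP0 : pd2 (psiSep R (fun q => -F q) (p s) y) (z s) y = 0 := by
    rw [pd2_psiSep hRc, hzs, hs, map_zero, neg_zero]
  have htotal := ((hF2 s).hasFDerivAt.add (hP.clm_comp_of_eq_zero (hA s) hP0)).add
    (hflip.clm_comp_of_eq_zero hM (by rw [hs, map_zero]))
  convert! htotal using 1
  · ext1 x
    simp only [Uphi, pd1_psiSep hF, phi21_psiSep hF hRc hsym hRsym, Pi.add_apply,
      comp_assoc, neg_comp]
  · ext1 h
    ext1 v
    have hRs : (fun y' => R (s, y')) = fun y' => Ring.inverse (pd1 F s y') := by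
      ext1 y'; exact hR s y'
    have hcancel : ∀ w, pd1 F s y (Ring.inverse (pd1 F s y) w) = w := fun w =>
      DFunLike.congr_fun (Ring.mul_inverse_cancel _ (hinv s y)) w
    have hcancel' : ∀ w, Ring.inverse (pd1 F s y) (pd1 F s y w) = w := fun w =>
      DFunLike.congr_fun (Ring.inverse_mul_cancel _ (hinv s y)) w
    simp only [hone, inverse_neg_one_clm]
    simp only [hps, hzs, hRs]
    simp [fderiv_inverse_pd1_snd_apply hF hinv,
      fderiv_pd2_fst_eq_fderiv_pd1_snd hF, hcancel, hcancel']

lemma hasFDerivAt_Vphi_psiSep (hF : ContDiff ℝ ∞ F)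
    (hinv : ∀ (x : E dx) (y : E dy), IsUnit (pd1 F x y))
    (hsym : ∀ (x : E dx) (y : E dy), adjoint (pd1 F x y) = pd1 F x y)
    (hR : ∀ x y, R (x, y) = Ring.inverse (pd1 F x y))
    (hRc : ContDiff ℝ ∞ R) (hRsym : ∀ q, adjoint (R q) = R q)
    (hp : DifferentiableAt ℝ p s) (hz : DifferentiableAt ℝ z s) (hps : p s = s) (hzs : z s = s)
    (hs : F (s, y) = 0) :
    HasFDerivAt (fun x => Vphi F (psiSep R (fun q => -F q) (p x) y) (fun _ => z x) x y)
      (0 : E dx →L[ℝ] E dx →L[ℝ] E dx) s := by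
  have hA : Differentiable ℝ (fun x => pd1 F x y) :=
    differentiable_comp_mk_left (contDiff_pd1_s12 hF) y
  have hf : HasFDerivAt (fun x => F (x, y)) (pd1 F s y) s :=
    (differentiable_comp_mk_left hF y s).hasFDerivAt
  have hDA : Differentiable ℝ (fun x => fderiv ℝ (fun x' => pd1 F x' y) x) :=
    (((contDiff_pd1_s12 hF).comp (contDiff_id.prodMk contDiff_const)).fderiv_right
      (m := ∞) (by simp)).differentiable (by simp)
  have hAz : DifferentiableAt ℝ (fun x => pd1 F (z x) y) s :=
    DifferentiableAt.comp s (g := fun x => pd1 F x y) (hA _) hz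
  have hRp : DifferentiableAt ℝ (fun x => R (p x, y)) s :=
    DifferentiableAt.comp s (g := fun x => R (x, y)) (differentiable_comp_mk_left hRc y _) hp
  have hDAz : DifferentiableAt ℝ (fun x => fderiv ℝ (fun x' => pd1 F x' y) (z x)) s :=
    DifferentiableAt.comp s (g := fun x => fderiv ℝ (fun x' => pd1 F x' y) x) (hDA _) hz
  have hone : -((R (p s, y)).comp (pd1 F (z s) y)) = -1 := by
    rw [hps, hzs, hR]
    exact congrArg _ (Ring.inverse_mul_cancel _ (hinv s y))
  have hone' : -((pd1 F (z s) y).comp (R (p s, y))) = -1 := by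
    rw [hps, hzs, hR]
    exact congrArg _ (Ring.mul_inverse_cancel _ (hinv s y))
  have hK := differentiableAt_ringInverse_comp (hRp.clm_comp hAz).fun_neg
    (hone ▸ isUnit_neg_one_clm)
  have hK' := differentiableAt_ringInverse_comp (hAz.clm_comp hRp).fun_neg
    (hone' ▸ isUnit_neg_one_clm)
  have hadj : ∀ x, adjoint (-((R (p x, y)).comp (pd1 F (z x) y))) =
      -((pd1 F (z x) y).comp (R (p x, y))) := fun x => by
    rw [map_neg, adjoint_comp, hsym, hRsym]
  have hN := (HasFDerivAt.flip_apply_of_eq_zero hDAz (hRp.hasFDerivAt.clm_apply hf)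
    (by rw [hs, map_zero])).fun_neg
  have hNK := hN.clm_comp hK.hasFDerivAt
  have htotal := (hNK.clm_comp_of_eq_zero hK' (by simp [hs])).add (hA s).hasFDerivAt
  convert! htotal using 1
  · ext1 x
    simp only [Vphi, pd1_psiSep hF, phi11_psiSep hF hsym hRsym, hadj, Pi.add_apply]
  · ext1 h
    ext1 v
    have hcancel' : ∀ w, Ring.inverse (pd1 F s y) (pd1 F s y w) = w := fun w =>
      DFunLike.congr_fun (Ring.inverse_mul_cancel _ (hinv s y)) w
    simp only [hone, hone', inverse_neg_one_clm]
    simp only [hps, hzs, hR]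
    simp [hs, hcancel', fderiv_pd1_fst_symm hF s y v h]

lemma hasFDerivAt_Psiphi_psiSep (hF : ContDiff ℝ ∞ F)
    (hinv : ∀ (x : E dx) (y : E dy), IsUnit (pd1 F x y))
    (hsym : ∀ (x : E dx) (y : E dy), adjoint (pd1 F x y) = pd1 F x y)
    (hR : ∀ x y, R (x, y) = Ring.inverse (pd1 F x y))
    (hp : DifferentiableAt ℝ p s) (hz : DifferentiableAt ℝ z s) (hps : p s = s) (hzs : z s = s)
    (hs : F (s, y) = 0) (a : E dx) :
    HasFDerivAt
      (fun x => Psiphi F (psiSep R (fun q => -F q) (p x) y) (fun _ => z x) x y a)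
      (0 : E dx →L[ℝ] E dy) s := by
  have hRc : ContDiff ℝ ∞ R := by
    have : R = fun q => Ring.inverse (pd1 F q.1 q.2) := funext fun q => hR q.1 q.2
    rw [this]
    exact contDiff_inverse_pd1 hF hinv
  have hRsym : ∀ q, adjoint (R q) = R q := fun q => by
    rw [← Prod.mk.eta (p := q), hR, ← star_eq_adjoint, ← Ring.inverse_star, star_eq_adjoint,
      hsym]
  have hDR : Differentiable ℝ (fun x => fderiv ℝ (fun y' => R (x, y')) y) :=
    (ContDiff.fderiv (m := ∞) (n := ∞) (f := fun x y' => R (x, y')) hRc contDiff_const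
      (by simp)).differentiable (by simp)
  have hDRp : DifferentiableAt ℝ (fun x => fderiv ℝ (fun y' => R (p x, y')) y) s :=
    DifferentiableAt.comp s (g := fun x => fderiv ℝ (fun y' => R (x, y')) y) (hDR _) hp
  have hFz : DifferentiableAt ℝ (fun x => F (z x, y)) s :=
    DifferentiableAt.comp s (g := fun x => F (x, y)) (differentiable_comp_mk_left hF y _) hz
  have hP : DifferentiableAt ℝ
      (fun x => pd2 (psiSep R (fun q => -F q) (p x) y) (z x) y) s := by
    simp only [pd2_psiSep hRc]
    exact ((differentiableAt_clm_flip hDRp).clm_apply hFz).fun_neg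
  have hU := hasFDerivAt_Uphi_psiSep hF hinv hsym hR hRc hRsym hp hz hps hzs hs hP.hasFDerivAt
  have hV := hasFDerivAt_Vphi_psiSep hF hinv hsym hR hRc hRsym hp hz hps hzs hs
  have hVs : Vphi F (psiSep R (fun q => -F q) (p s) y) (fun _ => z s) s y = pd1 F s y := by
    simp [Vphi, phi11_psiSep hF hsym hRsym, hs]
  obtain ⟨u, hu⟩ := hinv s y
  have hinvV := hasFDerivAt_ringInverse (𝕜 := ℝ) u
  rw [hu, ← hVs] at hinvV
  have hT := hP.hasFDerivAt.sub ((hinvV.comp s hV).clm_comp hU)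
  have hT0 : HasFDerivAt (fun x => pd2 (psiSep R (fun q => -F q) (p x) y) (z x) y -
      (Ring.inverse (Vphi F (psiSep R (fun q => -F q) (p x) y) (fun _ => z x) x y)).comp
        (Uphi F (psiSep R (fun q => -F q) (p x) y) (fun _ => z x) x y))
      (0 : E dx →L[ℝ] E dy →L[ℝ] E dx) s := by
    convert! hT using 1
    ext1 h
    ext1 v
    have hcancel' : ∀ w, Ring.inverse (pd1 F s y) (pd1 F s y w) = w := fun w =>
      DFunLike.congr_fun (Ring.inverse_mul_cancel _ (hinv s y)) w
    simp [hVs, hcancel']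
  convert! hT0.adjoint_apply_of_zero a using 1
  ext1 x
  rw [Psiphi, map_sub, adjoint_comp, ← star_eq_adjoint (Ring.inverse _), ← Ring.inverse_star,
    star_eq_adjoint]

end SuperEfficiency

/-- the Newton-like reparameterization
    (R(x,y) = F₁(x,y)⁻¹, Q(z,ȳ) = −F(z,ȳ)) is super-efficient. -/
theorem stmt12 (dx dy : ℕ) (hdx : 0 < dx) (hdy : 0 < dy)
    (F : E dx × E dy → E dx) (g : E dx × E dy → ℝ)
    (hF : ContDiff ℝ (⊤ : ℕ∞) F) (hg : ContDiff ℝ (⊤ : ℕ∞) g)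
    (hinv : ∀ (x : E dx) (y : E dy), IsUnit (pd1 F x y))
    (xs : E dy → E dx) (hxs : Differentiable ℝ xs)
    (hroot : ∀ y : E dy, F (xs y, y) = 0)
    (a : E dx) (m : E dy → ℝ) (hm : ContDiff ℝ (⊤ : ℕ∞) m)
    (hgdef : ∀ (x : E dx) (y : E dy), g (x, y) = ⟪a, x⟫ + m y)
    (hsym : ∀ (x : E dx) (y : E dy), adjoint (pd1 F x y) = pd1 F x y)
    (hbij : ∀ y : E dy, Function.Bijective (fun x => F (x, y)))
    (Finv : E dx × E dy → E dx) (hFinv : ContDiff ℝ (⊤ : ℕ∞) Finv)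
    (hleft : ∀ (x : E dx) (y : E dy), Finv (F (x, y), y) = x)
    (hright : ∀ (w : E dx) (y : E dy), F (Finv (w, y), y) = w)
    (R : E dx × E dy → (E dx →L[ℝ] E dx))
    (hR : ∀ (x : E dx) (y : E dy), R (x, y) = Ring.inverse (pd1 F x y))
    (Q : E dx × E dy → E dx) (hQ : ∀ p : E dx × E dy, Q p = -F p)
    (Qinv : E dx × E dy → E dx) (hQinv : ∀ p : E dx × E dy, Qinv p = Finv (-p.1, p.2)) :
    ∀ y : E dy,
      fderiv ℝ (fun x =>
        Omegaphi F g (psiSep R Q (xs y) y) (psiSepInv R Qinv (xs y) y) x y) (xs y) = 0 ∧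
      fderiv ℝ (fun x => OmegaLoc F g R Q Qinv x y) (xs y) = 0 := by
  intro y
  obtain rfl : Q = fun q => -F q := funext hQ
  have hgrad1 : ∀ x, grad1 g x y = a := fun x => by
    simp only [grad1, hgdef]
    refine HasGradientAt.gradient (hasGradientAt_iff_hasFDerivAt.2 ?_)
    exact ((innerSL ℝ a).hasFDerivAt (x := x)).add_const (m y)
  have hgrad2 : ∀ x, grad2 g x y = gradient m y := fun x => by
    simp only [grad2, hgdef, gradient, fderiv_const_add]
  have hFinv0 : Finv (0, y) = xs y := by rw [← hroot y, hleft]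
  constructor
  · simp only [Omegaphi, hgrad1, hgrad2]
    rw [fderiv_const_add]
    refine (hasFDerivAt_Psiphi_psiSep (p := fun _ => xs y)
      (z := fun x => psiSepInv R Qinv (xs y) y (x, y)) hF hinv hsym hR
      (differentiableAt_const _) ?_ rfl ?_ (hroot y) a).fderiv
    · simp only [psiSepInv, hQinv]
      exact DifferentiableAt.comp (xs y) (g := fun w => Finv (w, y))
        (differentiable_comp_mk_left hFinv y _)
        ((Ring.inverse (R (xs y, y))).differentiableAt.comp (xs y)
          (differentiableAt_id.sub_const (xs y))).fun_neg
    · simp [psiSepInv, hQinv, hFinv0]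
  · have hz : ∀ x, psiSepInv R Qinv x y (x, y) = xs y := fun x => by
      simp [psiSepInv, hQinv, hFinv0]
    have hloc : (fun x => OmegaLoc F g R (fun q => -F q) Qinv x y) = fun x =>
        gradient m y + Psiphi F (psiSep R (fun q => -F q) x y) (fun _ => xs y) x y a := by
      ext1 x
      simp only [OmegaLoc, Omegaphi, hgrad1, hgrad2, Psiphi, Uphi, Vphi, hz]
    rw [hloc, fderiv_const_add]
    exact (hasFDerivAt_Psiphi_psiSep hF hinv hsym hR differentiableAt_id
      (differentiableAt_const _) rfl rfl (hroot y) a).fderiv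
end
end
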